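/- arXiv:2307.11533 — 4 statements merged into one kernel-verified Lean document; each statement's English description precedes it below -/
import Mathlib

section
/- Let n ≥ 1 be a natural number, x ∈ (0,∞), and let p : ℕ → [0,∞) be a probability mass function on ℕ of a random variable K with mean n·x and finite variance Var[K]. If f : [0,∞) → ℝ satisfies |f(x) − f(y)| ≤ L|x − y|^α for all x, y ∈ [0,∞) with L > 0 and α ∈ (0,1], then |f(x) − S_n(f;x)| ≤ (L/n^α)·(Var[K])^{α/2}, where S_n(f;x) := ∑_{k=0}^∞ f(k/n) p(k). -/
/-- Jensen's inequality for the concave power `t ↦ t ^ β`, `0 < β < 1`, against a probability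
distribution on an arbitrary index set. -/
theorem summable_and_tsum_rpow_mul_le {ι : Type*} {w z : ι → ℝ} {β : ℝ} (hw : ∀ i, 0 ≤ w i)
    (hw1 : HasSum w 1) (hz : ∀ i, 0 ≤ z i) (hzw : Summable fun i => z i * w i)
    (hβ : 0 < β) (hβ1 : β < 1) :
    (Summable fun i => z i ^ β * w i) ∧
      ∑' i, z i ^ β * w i ≤ (∑' i, z i * w i) ^ β := by
  have hconj : (β⁻¹).HolderConjugate (1 - β)⁻¹ :=
    Real.HolderConjugate.inv_inv hβ (sub_pos.2 hβ1) (by ring)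
  have hprod (i : ι) : (z i * w i) ^ β * w i ^ (1 - β) = z i ^ β * w i := by
    rw [Real.mul_rpow (hz i) (hw i), mul_assoc,
      ← Real.rpow_add_of_nonneg (hw i) hβ.le (sub_pos.2 hβ1).le, add_sub_cancel, Real.rpow_one]
  have hpow₁ (i : ι) : ((z i * w i) ^ β) ^ β⁻¹ = z i * w i :=
    Real.rpow_rpow_inv (mul_nonneg (hz i) (hw i)) hβ.ne'
  have hpow₂ (i : ι) : (w i ^ (1 - β)) ^ (1 - β)⁻¹ = w i :=
    Real.rpow_rpow_inv (hw i) (sub_pos.2 hβ1).ne'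
  have key := Real.summable_and_inner_le_Lp_mul_Lq_tsum_of_nonneg hconj
    (f := fun i => (z i * w i) ^ β) (g := fun i => w i ^ (1 - β))
    (fun i => Real.rpow_nonneg (mul_nonneg (hz i) (hw i)) _)
    (fun i => Real.rpow_nonneg (hw i) _)
    (by simpa only [hpow₁] using hzw) (by simpa only [hpow₂] using hw1.summable)
  simpa only [hprod, hpow₁, hpow₂, hw1.tsum_eq, one_div, inv_inv, Real.one_rpow, mul_one]
    using key

/-- Error bound for the general approximation scheme `S_n(f;x) = ∑_{k} f(k/n) p(k)` built from a
probability mass function `p` on `ℕ` with mean `n·x` and finite variance, for a function `f`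
satisfying the plain Hölder condition:
`|f(x) - S_n(f;x)| ≤ (L / n^α) · Var[K]^(α/2)`. -/
theorem approx_scheme_plain_holder
    (n : ℕ) (hn : 1 ≤ n) (x : ℝ) (hx : 0 < x)
    (p : ℕ → ℝ) (hp : ∀ k, 0 ≤ p k) (hp1 : ∑' k, p k = 1)
    (hmean : ∑' (k : ℕ), (k : ℝ) * p k = n * x)
    (hVsum : Summable fun k : ℕ => ((k : ℝ) - n * x) ^ 2 * p k)
    (f : ℝ → ℝ) (L α : ℝ) (hL : 0 < L) (hα : 0 < α) (hα1 : α ≤ 1)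
    (hf : ∀ y z : ℝ, 0 ≤ y → 0 ≤ z → |f y - f z| ≤ L * |y - z| ^ α) :
    |f x - ∑' (k : ℕ), f ((k : ℝ) / n) * p k|
      ≤ L / (n : ℝ) ^ α * (∑' (k : ℕ), ((k : ℝ) - n * x) ^ 2 * p k) ^ (α / 2) := by
  have hn0 : (0 : ℝ) < n := by exact_mod_cast hn
  have hsum : Summable p := by
    by_contra h
    simp [tsum_eq_zero_of_not_summable h] at hp1
  have hp1' : HasSum p 1 := hp1 ▸ hsum.hasSum
  obtain ⟨hs, hle⟩ := summable_and_tsum_rpow_mul_le hp hp1'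
    (fun k : ℕ => sq_nonneg ((k : ℝ) - n * x)) hVsum (half_pos hα) (by linarith)
  have hbound (k : ℕ) : ‖(f x - f ((k : ℝ) / n)) * p k‖ ≤
      L / (n : ℝ) ^ α * ((((k : ℝ) - n * x) ^ 2) ^ (α / 2) * p k) := by
    have hdist : |x - (k : ℝ) / n| = |(k : ℝ) - n * x| / n := by
      rw [abs_sub_comm, ← abs_of_pos hn0, ← abs_div, abs_of_pos hn0]
      congr 1
      field_simp
    have hsq : (((k : ℝ) - n * x) ^ 2) ^ (α / 2) = |(k : ℝ) - n * x| ^ α := by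
      rw [← sq_abs, ← Real.rpow_natCast, ← Real.rpow_mul (abs_nonneg _)]
      congr 1
      push_cast
      ring
    rw [Real.norm_eq_abs, abs_mul, abs_of_nonneg (hp k), hsq, ← mul_assoc]
    refine mul_le_mul_of_nonneg_right ((hf x (k / n) hx.le (by positivity)).trans_eq ?_) (hp k)
    rw [hdist, Real.div_rpow (abs_nonneg _) hn0.le]
    ring
  have hmajor := hs.mul_left (L / (n : ℝ) ^ α)
  have hdiff : Summable fun k : ℕ => (f x - f ((k : ℝ) / n)) * p k :=
    hmajor.of_norm_bounded hbound
  have heq : f x - ∑' k : ℕ, f ((k : ℝ) / n) * p k = ∑' k : ℕ, (f x - f ((k : ℝ) / n)) * p k := by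
    have h := ((hp1'.mul_left (f x)).sub hdiff.hasSum).tsum_eq
    simp only [sub_mul, sub_sub_cancel, mul_one] at h ⊢
    linarith
  rw [heq, ← Real.norm_eq_abs]
  calc ‖∑' k : ℕ, (f x - f ((k : ℝ) / n)) * p k‖
      ≤ ∑' k : ℕ, L / (n : ℝ) ^ α * ((((k : ℝ) - n * x) ^ 2) ^ (α / 2) * p k) :=
        tsum_of_norm_bounded hmajor.hasSum hbound
    _ = L / (n : ℝ) ^ α * ∑' k : ℕ, (((k : ℝ) - n * x) ^ 2) ^ (α / 2) * p k := tsum_mul_left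
    _ ≤ _ := mul_le_mul_of_nonneg_left hle (by positivity)
end

section
/- Let f : [0,∞) → ℝ satisfy |f(x) − f(y)| ≤ L|x − y|^α for all x, y ∈ [0,∞), with L > 0 and α ∈ (0,1]. Then for all n ≥ 1 and all x ∈ (0,∞), the Szász-Mirakjan operator satisfies |f(x) − S_n(f;x)| ≤ (L/n^{α/2}) · x^{α/2}. -/
/-- The Poisson weight `e⁻ʳ rᵏ / k!`. -/
noncomputable def poissonWeight (r : ℝ) (k : ℕ) : ℝ :=
  Real.exp (-r) * r ^ k / k.factorial

theorem poissonWeight_nonneg {r : ℝ} (hr : 0 ≤ r) (k : ℕ) : 0 ≤ poissonWeight r k := by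
  unfold poissonWeight
  positivity

theorem hasSum_poissonWeight (r : ℝ) : HasSum (poissonWeight r) 1 := by
  have h := (NormedSpace.expSeries_div_hasSum_exp r).mul_left (Real.exp (-r))
  rw [← Real.exp_eq_exp_ℝ, ← Real.exp_add, neg_add_cancel, Real.exp_zero] at h
  exact h.congr_fun fun k => mul_div_assoc _ _ _

theorem succ_mul_poissonWeight_succ (r : ℝ) (k : ℕ) :
    ((k + 1 : ℕ) : ℝ) * poissonWeight r (k + 1) = r * poissonWeight r k := by
  unfold poissonWeight
  rw [Nat.factorial_succ]
  push_cast
  field_simp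
  ring

/-- The Stein–Chen identity `E[N g(N)] = r E[g(N + 1)]` for a Poisson variable `N` of mean `r`. -/
theorem hasSum_natCast_mul_poissonWeight {r S : ℝ} {g : ℕ → ℝ}
    (h : HasSum (fun k => g (k + 1) * poissonWeight r k) S) :
    HasSum (fun k : ℕ => k * g k * poissonWeight r k) (r * S) := by
  rw [← hasSum_nat_add_iff' 1]
  simp only [Finset.sum_range_one, Nat.cast_zero, zero_mul, sub_zero]
  refine (h.mul_left r).congr_fun fun k => ?_
  linear_combination g (k + 1) * succ_mul_poissonWeight_succ r k

/-- The variance of the Poisson distribution of mean `r` is `r`. -/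
theorem hasSum_sub_sq_mul_poissonWeight (r : ℝ) :
    HasSum (fun k : ℕ => ((k : ℝ) - r) ^ 2 * poissonWeight r k) r := by
  have h0 := hasSum_poissonWeight r
  have h1 : HasSum (fun k : ℕ => (k : ℝ) * poissonWeight r k) r := by
    have := hasSum_natCast_mul_poissonWeight (g := fun _ => 1) (by simpa using h0)
    simpa using this
  have h2 : HasSum (fun k : ℕ => (k : ℝ) * k * poissonWeight r k) (r * (r + 1)) := by
    refine hasSum_natCast_mul_poissonWeight (g := fun k => (k : ℝ)) ?_
    simpa [add_mul] using h1.add h0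
  have h := (h2.sub (h1.mul_left (2 * r))).add (h0.mul_left (r ^ 2))
  rw [show r * (r + 1) - 2 * r * r + r ^ 2 * 1 = r by ring] at h
  exact h.congr_fun fun k => by ring

/-- The concave function `t ↦ t ^ (α / 2)` at `d ^ 2` lies below its tangent line at `v`. -/
theorem abs_rpow_le_tangent {v α : ℝ} (hv : 0 < v) (hα : 0 ≤ α) (hα2 : α ≤ 2) (d : ℝ) :
    |d| ^ α ≤ v ^ (α / 2) * (1 + α / 2 * (d ^ 2 / v - 1)) := by
  have hd : |d| ^ α = v ^ (α / 2) * (d ^ 2 / v) ^ (α / 2) := by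
    rw [← Real.mul_rpow hv.le (by positivity), mul_div_cancel₀ _ hv.ne', ← sq_abs,
      ← Real.rpow_natCast, ← Real.rpow_mul (abs_nonneg d)]
    congr 1
    push_cast
    ring
  rw [hd]
  gcongr
  have ht : 0 ≤ d ^ 2 / v := by positivity
  have h := rpow_one_add_le_one_add_mul_self (s := d ^ 2 / v - 1) (by linarith)
    (p := α / 2) (by linarith) (by linarith)
  simpa using h

/-- Error bound for the Szász-Mirakjan operator for a function satisfying the plain Hölder
condition: `|f(x) - S_n(f;x)| ≤ (L / n^(α/2)) · x^(α/2)`. -/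
theorem szasz_mirakjan_plain_holder
    (f : ℝ → ℝ) (L α : ℝ) (hL : 0 < L) (hα : 0 < α) (hα1 : α ≤ 1)
    (hf : ∀ y z : ℝ, 0 ≤ y → 0 ≤ z → |f y - f z| ≤ L * |y - z| ^ α)
    (n : ℕ) (hn : 1 ≤ n) (x : ℝ) (hx : 0 < x) :
    |f x - ∑' (k : ℕ), f ((k : ℝ) / n) * (Real.exp (-(n * x)) * (n * x) ^ k / k.factorial)|
      ≤ L / (n : ℝ) ^ (α / 2) * x ^ (α / 2) := by
  have hn0 : (0 : ℝ) < n := by exact_mod_cast hn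
  change |f x - ∑' k : ℕ, f ((k : ℝ) / n) * poissonWeight (n * x) k| ≤ _
  set w := poissonWeight (n * x)
  have hw : ∀ k, 0 ≤ w k := poissonWeight_nonneg (by positivity)
  have h0 : HasSum w 1 := hasSum_poissonWeight _
  have hv : 0 < x / n := by positivity
  set C := L * (x / n) ^ (α / 2) with hC
  have hbound : ∀ k : ℕ, ‖(f x - f ((k : ℝ) / n)) * w k‖ ≤
      C * (1 + α / 2 * ((x - (k : ℝ) / n) ^ 2 / (x / n) - 1)) * w k := by
    intro k
    rw [norm_mul, Real.norm_eq_abs, Real.norm_of_nonneg (hw k), hC, mul_assoc L]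
    gcongr
    · exact hw k
    · exact (hf _ _ hx.le (by positivity)).trans
        (by gcongr; exact abs_rpow_le_tangent hv hα.le (by linarith) _)
  have hsum : HasSum (fun k : ℕ =>
      C * (1 + α / 2 * ((x - (k : ℝ) / n) ^ 2 / (x / n) - 1)) * w k) C := by
    have h2 := (hasSum_sub_sq_mul_poissonWeight (n * x)).mul_left (C * (α / 2) / (n * x))
    have h := (h0.mul_left (C * (1 - α / 2))).add h2
    rw [div_mul_cancel₀ _ (by positivity), mul_one, ← mul_add, sub_add_cancel, mul_one] at h
    refine h.congr_fun fun k => ?_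
    change _ = _ + _ * (_ * w k)
    field_simp
    ring
  have hdiff : Summable fun k : ℕ => (f x - f ((k : ℝ) / n)) * w k :=
    .of_norm_bounded hsum.summable hbound
  have hS : HasSum (fun k : ℕ => f ((k : ℝ) / n) * w k)
      (f x * 1 - ∑' k : ℕ, (f x - f ((k : ℝ) / n)) * w k) :=
    ((h0.mul_left (f x)).sub hdiff.hasSum).congr_fun fun k => by ring
  rw [hS.tsum_eq, mul_one, sub_sub_cancel]
  refine (tsum_of_norm_bounded hsum hbound).trans_eq ?_
  rw [hC, Real.div_rpow hx.le hn0.le]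
  ring
end

section
/- Let f : [0,∞) → ℝ satisfy the general Hölder-type condition |f(x) − f(y)| ≤ L|x − y|^α/(γ + x + y)^β for all x, y ∈ [0,∞), with L > 0, α ∈ (0,1], γ ∈ [0,∞), and β > α/2. Then for all n ≥ 1 and all x ∈ (0,∞), the Szász-Mirakjan operator satisfies |f(x) − S_n(f;x)| ≤ (L/n^{α/2}) · (γ + x)^{α/2 − β}. -/
/-- The Poisson weights sum to one. -/
theorem hasSum_poisson_weight (r : ℝ) :
    HasSum (fun k : ℕ => Real.exp (-r) * r ^ k / k.factorial) 1 := by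
  have h := (NormedSpace.expSeries_div_hasSum_exp r).mul_left (Real.exp (-r))
  rw [← Real.exp_eq_exp_ℝ, ← Real.exp_add, neg_add_cancel, Real.exp_zero] at h
  simpa only [mul_div_assoc] using h

theorem succ_mul_poisson_weight_succ (r : ℝ) (k : ℕ) :
    ((k + 1 : ℕ) : ℝ) * (Real.exp (-r) * r ^ (k + 1) / (k + 1).factorial) =
      r * (Real.exp (-r) * r ^ k / k.factorial) := by
  rw [Nat.factorial_succ]
  push_cast
  field_simp
  ring

/-- The first moment of the Poisson weights. -/
theorem hasSum_mul_poisson_weight (r : ℝ) :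
    HasSum (fun k : ℕ => (k : ℝ) * (Real.exp (-r) * r ^ k / k.factorial)) r := by
  rw [← hasSum_nat_add_iff' 1]
  simp only [succ_mul_poisson_weight_succ]
  simpa using (hasSum_poisson_weight r).mul_left r

/-- The second moment of the Poisson weights. -/
theorem hasSum_sq_mul_poisson_weight (r : ℝ) :
    HasSum (fun k : ℕ => (k : ℝ) ^ 2 * (Real.exp (-r) * r ^ k / k.factorial))
      (r * (r + 1)) := by
  rw [← hasSum_nat_add_iff' 1]
  simp only [pow_two, mul_assoc, succ_mul_poisson_weight_succ]
  convert ((hasSum_mul_poisson_weight r).add (hasSum_poisson_weight r)).mul_left r using 1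
  · rfl
  · funext k
    push_cast
    ring
  · simp

/-- The second central moment of the Szász-Mirakjan operator is `x / n`. -/
theorem hasSum_szasz_mirakjan_central_moment {n : ℕ} (hn : n ≠ 0) (x : ℝ) :
    HasSum (fun k : ℕ => (x - (k : ℝ) / n) ^ 2 *
      (Real.exp (-(n * x)) * (n * x) ^ k / k.factorial)) (x / n) := by
  have hn' : (n : ℝ) ≠ 0 := Nat.cast_ne_zero.mpr hn
  convert (((hasSum_poisson_weight (n * x)).mul_left (x ^ 2)).sub
    ((hasSum_mul_poisson_weight (n * x)).mul_left (2 * x / n))).add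
    ((hasSum_sq_mul_poisson_weight (n * x)).mul_left (1 / (n : ℝ) ^ 2)) using 1
  · rfl
  · funext k
    ring
  · field_simp
    ring

/-- The power function `s ↦ s ^ p` with `0 ≤ p ≤ 1` lies below its tangent line at `v`. -/
theorem rpow_le_tangent {s v p : ℝ} (hs : 0 ≤ s) (hv : 0 < v) (hp : 0 ≤ p) (hp1 : p ≤ 1) :
    s ^ p ≤ v ^ p * (1 + p * (s / v - 1)) := by
  have hsv : 0 ≤ s / v := by positivity
  have h := rpow_one_add_le_one_add_mul_self (s := s / v - 1) (by linarith) hp hp1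
  calc s ^ p = v ^ p * (1 + (s / v - 1)) ^ p := by
        rw [← Real.mul_rpow hv.le (by linarith)]
        congr 1
        field_simp
        ring
    _ ≤ _ := by gcongr

/-- Decaying error bound for the Szász-Mirakjan operator for a function satisfying the general
Hölder-type condition with `β > α/2`:
`|f(x) - S_n(f;x)| ≤ (L / n^(α/2)) · (γ + x)^(α/2 - β)`. -/
theorem szasz_mirakjan_decaying_bound
    (f : ℝ → ℝ) (L α β γ : ℝ) (hL : 0 < L) (hα : 0 < α) (hα1 : α ≤ 1)
    (hβ : α / 2 < β) (hγ : 0 ≤ γ)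
    (hf : ∀ y z : ℝ, 0 ≤ y → 0 ≤ z →
      |f y - f z| ≤ L * |y - z| ^ α / (γ + y + z) ^ β)
    (n : ℕ) (hn : 1 ≤ n) (x : ℝ) (hx : 0 < x) :
    |f x - ∑' (k : ℕ), f ((k : ℝ) / n) * (Real.exp (-(n * x)) * (n * x) ^ k / k.factorial)|
      ≤ L / (n : ℝ) ^ (α / 2) * (γ + x) ^ (α / 2 - β) := by
  have hn0 : n ≠ 0 := Nat.one_le_iff_ne_zero.mp hn
  have hnpos : (0 : ℝ) < n := by positivity
  have hβ0 : 0 < β := by linarith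
  have hγx : 0 < γ + x := by linarith
  have hv : 0 < x / n := by positivity
  set w : ℕ → ℝ := fun k => Real.exp (-(n * x)) * (n * x) ^ k / k.factorial
  have hw0 (k : ℕ) : 0 ≤ w k := by positivity
  have hw1 : HasSum w 1 := hasSum_poisson_weight (n * x)
  have hw2 : HasSum (fun k : ℕ => (x - (k : ℝ) / n) ^ 2 * w k) (x / n) :=
    hasSum_szasz_mirakjan_central_moment hn0 x
  set C : ℝ := L / (γ + x) ^ β with hC
  have hC0 : 0 ≤ C := by positivity
  have hpoint (k : ℕ) : |f x - f (k / n)| ≤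
      C * ((x / n) ^ (α / 2) * (1 + α / 2 * ((x - (k : ℝ) / n) ^ 2 / (x / n) - 1))) := by
    have hk : (0 : ℝ) ≤ k / n := by positivity
    have hsq : |x - (k : ℝ) / n| ^ α = ((x - (k : ℝ) / n) ^ 2) ^ (α / 2) := by
      rw [← sq_abs, ← Real.rpow_natCast, ← Real.rpow_mul (abs_nonneg _)]
      congr 1
      push_cast
      ring
    calc |f x - f (k / n)| ≤ L * |x - k / n| ^ α / (γ + x + k / n) ^ β := hf _ _ hx.le hk
      _ ≤ L * |x - k / n| ^ α / (γ + x) ^ β := by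
        gcongr _ / ?_ ^ β
        linarith
      _ = C * ((x - (k : ℝ) / n) ^ 2) ^ (α / 2) := by rw [hsq, hC]; ring
      _ ≤ _ := by
        gcongr
        exact rpow_le_tangent (sq_nonneg _) hv (by linarith) (by linarith)
  have hbound : HasSum (fun k : ℕ => C * ((x / n) ^ (α / 2) *
      (1 + α / 2 * ((x - (k : ℝ) / n) ^ 2 / (x / n) - 1))) * w k) (C * (x / n) ^ (α / 2)) := by
    convert ((hw1.mul_left (1 - α / 2)).add (hw2.mul_left (α / 2 / (x / n)))).mul_left
      (C * (x / n) ^ (α / 2)) using 1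
    · rfl
    · funext k
      ring
    · rw [div_mul_cancel₀ _ hv.ne']
      ring
  have hnorm (k : ℕ) : ‖(f x - f (k / n)) * w k‖ ≤ C * ((x / n) ^ (α / 2) *
      (1 + α / 2 * ((x - (k : ℝ) / n) ^ 2 / (x / n) - 1))) * w k := by
    rw [norm_mul, Real.norm_eq_abs, Real.norm_of_nonneg (hw0 k)]
    exact mul_le_mul_of_nonneg_right (hpoint k) (hw0 k)
  have hsum : Summable fun k : ℕ => (f x - f (k / n)) * w k :=
    Summable.of_norm_bounded hbound.summable hnorm
  have hfsum : HasSum (fun k : ℕ => f (k / n) * w k)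
      (f x - ∑' k : ℕ, (f x - f (k / n)) * w k) := by
    convert (hw1.mul_left (f x)).sub hsum.hasSum using 1
    · rfl
    · funext k
      ring
    · ring
  rw [hfsum.tsum_eq, sub_sub_cancel]
  calc |∑' k : ℕ, (f x - f (k / n)) * w k| ≤ C * (x / n) ^ (α / 2) :=
        tsum_of_norm_bounded hbound hnorm
    _ ≤ C * ((γ + x) / n) ^ (α / 2) := by
        gcongr
        linarith
    _ = L / (n : ℝ) ^ (α / 2) * (γ + x) ^ (α / 2 - β) := by
        rw [Real.div_rpow hγx.le hnpos.le, Real.rpow_sub hγx, hC]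
        ring
end

section
/- Let f : [0,∞) → ℝ be bounded with ‖f‖_∞ := sup_{y ∈ [0,∞)} |f(y)| < ∞, let n ≥ 1, x ∈ (0,∞), and set m = 2⌈nx⌉. Then the truncated Baskakov operator satisfies |S_n(f;x) − S̃_{n,m}(f;x)| ≤ ‖f‖_∞ · (1+x)/(n·x). -/
/-- The probability that a Pascal random variable with parameters `n`, `x` takes the value `k`. -/
noncomputable def pascalWeight (n : ℕ) (x : ℝ) (k : ℕ) : ℝ :=
  ((n + k - 1).choose k : ℝ) * x ^ k / (1 + x) ^ (n + k)

lemma pascalWeight_nonneg (n : ℕ) {x : ℝ} (hx : 0 < x) (k : ℕ) : 0 ≤ pascalWeight n x k := by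
  unfold pascalWeight
  positivity

lemma hasSum_pascalWeight {n : ℕ} (hn : 1 ≤ n) {x : ℝ} (hx : 0 < x) :
    HasSum (pascalWeight n x) 1 := by
  obtain ⟨j, rfl⟩ := Nat.exists_eq_add_of_le' hn
  have hx1 : (1 + x) ≠ 0 := by positivity
  have hr : ‖x / (1 + x)‖ < 1 := by
    rw [Real.norm_of_nonneg (by positivity), div_lt_one (by positivity)]
    linarith
  have h := (hasSum_choose_mul_geometric_of_norm_lt_one j hr).mul_left (1 / (1 + x) ^ (j + 1))
  have hone : 1 - x / (1 + x) = 1 / (1 + x) := by field_simp; ring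
  convert! h using 1
  · funext k
    have hc : (j + 1 + k - 1).choose k = (k + j).choose j := by
      rw [show j + 1 + k - 1 = k + j by omega, Nat.choose_symm_add]
    rw [pascalWeight, hc, div_pow, pow_add (1 + x) (j + 1) k]
    field_simp
  · rw [hone, one_div_pow]
    field_simp

lemma succ_mul_pascalWeight_succ (n : ℕ) {x : ℝ} (hx : 0 < x) (k : ℕ) :
    ((k : ℝ) + 1) * pascalWeight n x (k + 1) = n * x * pascalWeight (n + 1) x k := by
  have hc : (((n + k).choose (k + 1) : ℕ) : ℝ) * (k + 1) = ((n + k).choose k : ℕ) * n := by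
    have h := Nat.choose_succ_right_eq (n + k) k
    rw [Nat.add_sub_cancel] at h
    exact_mod_cast h
  have hx1 : (1 + x) ≠ 0 := by positivity
  rw [pascalWeight, pascalWeight, show n + (k + 1) - 1 = n + k by omega,
    show n + 1 + k - 1 = n + k by omega, show n + (k + 1) = n + 1 + k by omega, pow_succ x k]
  field_simp
  linear_combination hc

lemma hasSum_mul_pascalWeight {n : ℕ} {x : ℝ} (hx : 0 < x) {g : ℕ → ℝ} {s : ℝ}
    (hg : HasSum (fun k => g (k + 1) * pascalWeight (n + 1) x k) s) :
    HasSum (fun k : ℕ => (k : ℝ) * g k * pascalWeight n x k) (n * x * s) := by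
  rw [← hasSum_nat_add_iff' 1]
  convert! hg.mul_left (n * x) using 1
  · funext k
    push_cast
    linear_combination g (k + 1) * succ_mul_pascalWeight_succ n hx k
  · simp

lemma hasSum_pascalWeight_mean (n : ℕ) {x : ℝ} (hx : 0 < x) :
    HasSum (fun k : ℕ => (k : ℝ) * pascalWeight n x k) (n * x) := by
  have h := hasSum_mul_pascalWeight (n := n) (g := fun _ => 1) (s := 1) hx
    (by simpa using hasSum_pascalWeight (Nat.le_add_left 1 n) hx)
  simpa using h

lemma hasSum_pascalWeight_variance {n : ℕ} (hn : 1 ≤ n) {x : ℝ} (hx : 0 < x) :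
    HasSum (fun k : ℕ => ((k : ℝ) - n * x) ^ 2 * pascalWeight n x k) (n * x * (1 + x)) := by
  have h0 := hasSum_pascalWeight hn hx
  have h1 := hasSum_pascalWeight_mean n hx
  have h2 : HasSum (fun k : ℕ => (k : ℝ) * k * pascalWeight n x k)
      (n * x * ((n + 1 : ℕ) * x + 1)) := by
    refine hasSum_mul_pascalWeight hx (g := fun k => (k : ℝ)) ?_
    convert! (hasSum_pascalWeight_mean (n + 1) hx).add
      (hasSum_pascalWeight (Nat.le_add_left 1 n) hx) using 1
    funext k
    push_cast
    ring
  convert! (h2.sub (h1.mul_left (2 * (n * x)))).add (h0.mul_left ((n * x) ^ 2)) using 1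
  · funext k
    ring
  · push_cast
    ring

/-- Truncation error for the Baskakov operator of a bounded function with truncation point
`m = 2⌈nx⌉`: `|S_n(f;x) - S̃_{n,m}(f;x)| ≤ ‖f‖_∞ · (1+x)/(n·x)`. -/
theorem baskakov_truncation_error
    (f : ℝ → ℝ) (hbdd : BddAbove ((fun y => |f y|) '' Set.Ici (0 : ℝ)))
    (n : ℕ) (hn : 1 ≤ n) (x : ℝ) (hx : 0 < x) :
    |(∑' (k : ℕ), f ((k : ℝ) / n) *
          (((n + k - 1).choose k : ℝ) * x ^ k / (1 + x) ^ (n + k))) -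
        ∑ k ∈ Finset.range (2 * ⌈(n : ℝ) * x⌉₊ + 1),
          f ((k : ℝ) / n) * (((n + k - 1).choose k : ℝ) * x ^ k / (1 + x) ^ (n + k))|
      ≤ sSup ((fun y => |f y|) '' Set.Ici (0 : ℝ)) * (1 + x) / (n * x) := by
  set C := sSup ((fun y => |f y|) '' Set.Ici (0 : ℝ))
  set M := 2 * ⌈(n : ℝ) * x⌉₊ + 1 with hM
  have hnx : 0 < (n : ℝ) * x := by positivity
  have hC (k : ℕ) : |f ((k : ℝ) / n)| ≤ C :=
    le_csSup hbdd ⟨_, Set.mem_Ici.2 (by positivity), rfl⟩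
  have hC0 : 0 ≤ C := (abs_nonneg _).trans (hC 0)
  have hw := pascalWeight_nonneg n hx
  change |(∑' k : ℕ, f ((k : ℝ) / n) * pascalWeight n x k) -
    ∑ k ∈ Finset.range M, f ((k : ℝ) / n) * pascalWeight n x k| ≤ _
  have hsum : Summable fun k : ℕ => f ((k : ℝ) / n) * pascalWeight n x k := by
    refine ((hasSum_pascalWeight hn hx).summable.mul_left C).of_norm_bounded fun k => ?_
    rw [norm_mul, Real.norm_of_nonneg (hw k)]
    exact mul_le_mul_of_nonneg_right (hC k) (hw k)
  rw [← hsum.sum_add_tsum_nat_add M, add_sub_cancel_left, ← Real.norm_eq_abs]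
  have hvar := (hasSum_pascalWeight_variance hn hx).mul_left (C / (n * x) ^ 2)
  have htail := (hasSum_nat_add_iff' M).2 hvar
  refine (tsum_of_norm_bounded htail fun k => ?_).trans ?_
  · have hk : (n : ℝ) * x ≤ ((k + M : ℕ) : ℝ) - n * x := by
      have := Nat.le_ceil ((n : ℝ) * x)
      rw [hM]
      push_cast
      linarith [(Nat.cast_nonneg k : (0 : ℝ) ≤ k)]
    rw [norm_mul, Real.norm_of_nonneg (hw _), ← mul_assoc]
    refine mul_le_mul_of_nonneg_right ((hC _).trans ?_) (hw _)
    rw [div_mul_eq_mul_div, le_div_iff₀ (by positivity)]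
    gcongr
  · refine (sub_le_self _ (Finset.sum_nonneg fun k _ => ?_)).trans_eq ?_
    · have := hw k
      positivity
    · field_simp
end
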